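/- arXiv:2408.11620 — 2 statements merged into one kernel-verified Lean document; each statement's English description precedes it below -/
import Mathlib

section
/- Let p ∈ Δ*_m, q ∈ Δ*_n, c ∈ ℝ^{m×n}, and let (β_t)_{t≥0} be a positive, nondecreasing, concave annealing schedule with finite limit β_∞ = lim β_t < +∞ (so that necessarily α_t = β_t − β_{t−1} → 0). Let (π_t) be the sequence generated by Annealed Sinkhorn. Then (π_t) converges to the unique minimizer of the entropic optimal transport problem EOT_{β_∞}(p,q), i.e. the unique minimizer over Γ(p,q) of ⟨c,π⟩ + β_∞^{-1} KL(π | π^ref). -/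
open Finset Filter Topology ENNReal

noncomputable section

/-- Frobenius inner product `⟨c, π⟩ = ∑_{ij} c_ij π_ij`. -/
def frob {m n : ℕ} (c π : Matrix (Fin m) (Fin n) ℝ) : ℝ := ∑ i, ∑ j, c i j * π i j

/-- Row sums `π𝟙`. -/
def rowSum {m n : ℕ} (π : Matrix (Fin m) (Fin n) ℝ) : Fin m → ℝ := fun i => ∑ j, π i j

/-- Column sums `πᵀ𝟙`. -/
def colSum {m n : ℕ} (π : Matrix (Fin m) (Fin n) ℝ) : Fin n → ℝ := fun j => ∑ i, π i j

/-- Kullback–Leibler divergence between nonnegative vectors. -/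
def KLvec {k : ℕ} (a b : Fin k → ℝ) : ℝ := ∑ i, (a i * Real.log (a i / b i) - a i + b i)

/-- Kullback–Leibler divergence between nonnegative matrices. -/
def KLmat {m n : ℕ} (a b : Matrix (Fin m) (Fin n) ℝ) : ℝ :=
  ∑ i, ∑ j, (a i j * Real.log (a i j / b i j) - a i j + b i j)

/-- The tipless simplex `Δ*_k`: strictly positive entries summing to 1. -/
def simplexPos (k : ℕ) : Set (Fin k → ℝ) := {p | (∀ i, 0 < p i) ∧ ∑ i, p i = 1}

/-- The simplex `Δ_k`: nonnegative entries summing to 1. -/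
def simplexNN (k : ℕ) : Set (Fin k → ℝ) := {p | (∀ i, 0 ≤ p i) ∧ ∑ i, p i = 1}

/-- Transport plans `Γ(p, q)`. -/
def Gamma {m n : ℕ} (p : Fin m → ℝ) (q : Fin n → ℝ) : Set (Matrix (Fin m) (Fin n) ℝ) :=
  {π | (∀ i j, 0 ≤ π i j) ∧ rowSum π = p ∧ colSum π = q}

/-- Half-relaxed plans `Γ(*, q)`. -/
def GammaStar {m n : ℕ} (q : Fin n → ℝ) : Set (Matrix (Fin m) (Fin n) ℝ) :=
  {π | (∀ i j, 0 ≤ π i j) ∧ colSum π = q}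

/-- Reference plan `π^ref = (mn)⁻¹ 𝟙𝟙ᵀ`. -/
def piRef (m n : ℕ) : Matrix (Fin m) (Fin n) ℝ := fun _ _ => 1 / (m * n)

/-- Optimal transport value `OT(p,q)`. -/
def OTval {m n : ℕ} (c : Matrix (Fin m) (Fin n) ℝ) (p : Fin m → ℝ) (q : Fin n → ℝ) : ℝ :=
  ⨅ π : Gamma p q, frob c π.1

/-- Entropic OT objective `⟨c,π⟩ + β⁻¹ KL(π|π^ref)`. -/
def eotObj {m n : ℕ} (c : Matrix (Fin m) (Fin n) ℝ) (β : ℝ) (π : Matrix (Fin m) (Fin n) ℝ) : ℝ :=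
  frob c π + β⁻¹ * KLmat π (piRef m n)

/-- Entropic OT value `EOT_β(p,q)`. -/
def eotVal {m n : ℕ} (c : Matrix (Fin m) (Fin n) ℝ) (β : ℝ) (p : Fin m → ℝ) (q : Fin n → ℝ) : ℝ :=
  ⨅ π : Gamma p q, eotObj c β π.1

/-- Gibbs kernel `K = e^{-βc}` (entrywise). -/
def gibbs {m n : ℕ} (c : Matrix (Fin m) (Fin n) ℝ) (β : ℝ) : Matrix (Fin m) (Fin n) ℝ :=
  fun i j => Real.exp (-(β * c i j))

/-- Annealed Sinkhorn scaling vectors `(a_t, b_t)`: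
`b_0 = 𝟙`, `a_{t+1} = p ⊘ (K_t b_t)`, `b_{t+1} = q ⊘ (K_{t+1}ᵀ a_{t+1})`, `K_t = e^{-β_t c}`. -/
def sinkAB {m n : ℕ} (p : Fin m → ℝ) (q : Fin n → ℝ) (c : Matrix (Fin m) (Fin n) ℝ)
    (β : ℕ → ℝ) : ℕ → (Fin m → ℝ) × (Fin n → ℝ)
  | 0 => (fun _ => 1, fun _ => 1)
  | t + 1 =>
    let prev := sinkAB p q c β t
    let a : Fin m → ℝ := fun i => p i / ∑ j, gibbs c (β t) i j * prev.2 j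
    (a, fun j => q j / ∑ i, gibbs c (β (t + 1)) i j * a i)

/-- Annealed Sinkhorn primal iterate `π_t = diag(a_t) K_t diag(b_t)`. -/
def sinkPlan {m n : ℕ} (p : Fin m → ℝ) (q : Fin n → ℝ) (c : Matrix (Fin m) (Fin n) ℝ)
    (β : ℕ → ℝ) (t : ℕ) : Matrix (Fin m) (Fin n) ℝ :=
  fun i j => (sinkAB p q c β t).1 i * gibbs c (β t) i j * (sinkAB p q c β t).2 j

/-- `ℓ¹` norm of a vector. -/
def l1vec {k : ℕ} (a : Fin k → ℝ) : ℝ := ∑ i, |a i|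

/-- Oscillation semi-norm `‖c‖_osc = max c - min c`. -/
def cOsc {m n : ℕ} (c : Matrix (Fin m) (Fin n) ℝ) : ℝ :=
  (⨆ i, ⨆ j, c i j) - ⨅ i, ⨅ j, c i j

/-- `‖log p‖_∞`. -/
def logSup {k : ℕ} (p : Fin k → ℝ) : ℝ := ⨆ i, |Real.log (p i)|

/-- The rounding ("projection") procedure of Altschuler et al. (Algorithm 3). -/
def roundPlan {m n : ℕ} (p : Fin m → ℝ) (q : Fin n → ℝ) (π : Matrix (Fin m) (Fin n) ℝ) :
    Matrix (Fin m) (Fin n) ℝ :=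
  let π' : Matrix (Fin m) (Fin n) ℝ := fun i j => min 1 (p i / rowSum π i) * π i j
  let π'' : Matrix (Fin m) (Fin n) ℝ := fun i j => π' i j * min 1 (q j / colSum π' j)
  fun i j => π'' i j +
    (p i - rowSum π'' i) * (q j - colSum π'' j) / l1vec (fun i' => p i' - rowSum π'' i')

/-- Relaxed entropic objective `F^reg(π) = ⟨c,π⟩ + α⁻¹ KL(π𝟙|p) + β⁻¹ KL(π|π^ref)`. -/
def Freg {m n : ℕ} (c : Matrix (Fin m) (Fin n) ℝ) (p : Fin m → ℝ) (α β : ℝ)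
    (π : Matrix (Fin m) (Fin n) ℝ) : ℝ :=
  frob c π + α⁻¹ * KLvec (rowSum π) p + β⁻¹ * KLmat π (piRef m n)

/-- Dual functional for the relaxed entropic problem. -/
def dualFun {m n : ℕ} (p : Fin m → ℝ) (q : Fin n → ℝ) (c : Matrix (Fin m) (Fin n) ℝ)
    (α β : ℝ) (u : Fin m → ℝ) (v : Fin n → ℝ) : ℝ :=
  α⁻¹ * (∑ i, (1 - Real.exp (-(α * u i))) * p i) + ∑ j, v j * q j
    - β⁻¹ * (∑ i, ∑ j, Real.exp (β * (u i + v j - c i j)) * piRef m n i j) + β⁻¹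

/-- Dual functional of entropic OT. -/
def eotDual {m n : ℕ} (p : Fin m → ℝ) (q : Fin n → ℝ) (c : Matrix (Fin m) (Fin n) ℝ)
    (β : ℝ) (u : Fin m → ℝ) (v : Fin n → ℝ) : ℝ :=
  ∑ i, p i * u i + ∑ j, q j * v j
    + β⁻¹ * (1 - ∑ i, ∑ j, piRef m n i j * Real.exp (β * (u i + v j - c i j)))

/-- The set `C_β` of plans of the form `diag(a) e^{-βc} diag(b)` with `a, b ≥ 0`. -/
def scalingSet {m n : ℕ} (c : Matrix (Fin m) (Fin n) ℝ) (β : ℝ) :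
    Set (Matrix (Fin m) (Fin n) ℝ) :=
  {π | ∃ a : Fin m → ℝ, ∃ b : Fin n → ℝ, (∀ i, 0 ≤ a i) ∧ (∀ j, 0 ≤ b j) ∧
    π = fun i j => a i * Real.exp (-(β * c i j)) * b j}


/-!
Since `β` is bounded, the cross ratios of the kernels `K_t` are bounded away from zero, and by
Birkhoff's theorem a full Sinkhorn sweep contracts Hilbert's projective metric at a uniform rate.
Consecutive scalings `a_{t+2}` and `a_{t+1}` are the images of their predecessors under the sweeps
of two kernels that become indistinguishable as `β_{t+2} - β_{t+1} → 0`, so their projective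
distance tends to zero. As `p = a_{t+1} ⊙ K_t b_t` while the row sums of `π_t` are `a_t ⊙ K_t b_t`,
and as the column sums are exact, the marginals of `π_t` converge to `(p, q)`.

Every cluster point of `(π_t)` therefore lies in `Γ(p, q)`, and it keeps the cross ratios of
`e^{-β_∞ c}`. This forces it to be positive and of the form `e^{u_i + v_j - β_∞ c_ij}`, so that
`⟨c, π'⟩ + β_∞⁻¹ KL(π' | π^ref)` exceeds its value at `π` by `β_∞⁻¹ KL(π' | π)` on `Γ(p, q)`. The
cluster point is thus the strict minimizer, in particular unique, and compactness gives convergence.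
-/

section ScalarRecursion

lemma tendsto_zero_of_le_mul_add {u k e : ℕ → ℝ} {κ : ℝ} (hκ : κ < 1) (hu : ∀ t, 0 ≤ u t)
    (hk : Tendsto k atTop (𝓝 κ)) (he : Tendsto e atTop (𝓝 0))
    (h : ∀ t, u (t + 1) ≤ k t * u t + e t) : Tendsto u atTop (𝓝 0) := by
  obtain ⟨θ, hθ, hθ1⟩ := exists_between (max_lt hκ one_pos)
  obtain ⟨hκθ, hθ0⟩ := max_lt_iff.1 hθ
  refine tendsto_order.2 ⟨fun a ha => .of_forall fun t => ha.trans_le (hu t), fun ε hε => ?_⟩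
  have hcontract : ∀ᶠ t in atTop, u (t + 1) - ε / 2 ≤ θ * (u t - ε / 2) := by
    have herr : 0 < (1 - θ) * (ε / 2) := mul_pos (sub_pos.2 hθ1) (half_pos hε)
    filter_upwards [hk.eventually_le_const hκθ, he.eventually_le_const herr] with t hkt het
    linarith [h t, mul_le_mul_of_nonneg_right hkt (hu t)]
  obtain ⟨T, hT⟩ := eventually_atTop.1 hcontract
  have hgeom (s : ℕ) : u (s + T) - ε / 2 ≤ θ ^ s * (u T - ε / 2) := by
    simpa only [zero_add] using le_geom (u := fun s => u (s + T) - ε / 2) hθ0.le s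
      fun s _ => by simpa only [add_right_comm] using hT (s + T) (Nat.le_add_left T s)
  have hdecay : Tendsto (fun s => θ ^ s * (u T - ε / 2)) atTop (𝓝 0) := by
    simpa only [zero_mul] using
      (tendsto_pow_atTop_nhds_zero_of_lt_one hθ0.le hθ1).mul_const (u T - ε / 2)
  rw [← map_add_atTop_eq_nat T, eventually_map]
  filter_upwards [hdecay.eventually_lt_const (half_pos hε)] with s hs
  linarith [hgeom s]

lemma tendsto_one_of_relaxation {F ρ : ℕ → ℝ} {κ : ℝ} (hκ : |κ| < 1)
    (hF : Tendsto F atTop (𝓝 1)) (hρ : ∀ t, ρ (t + 1) = F t * (1 + κ * (ρ t - 1))) :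
    Tendsto ρ atTop (𝓝 1) := by
  have hk : Tendsto (fun t => |F t| * |κ|) atTop (𝓝 |κ|) := by simpa using hF.abs.mul_const |κ|
  have he : Tendsto (fun t => |F t - 1|) atTop (𝓝 0) := by simpa using (hF.sub_const 1).abs
  have hstep (t : ℕ) : |ρ (t + 1) - 1| ≤ |F t| * |κ| * |ρ t - 1| + |F t - 1| := by
    calc |ρ (t + 1) - 1| = |F t * κ * (ρ t - 1) + (F t - 1)| := by rw [hρ]; ring_nf
      _ ≤ |F t| * |κ| * |ρ t - 1| + |F t - 1| := by
        simpa only [abs_mul] using abs_add_le (F t * κ * (ρ t - 1)) (F t - 1)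
  simpa using (tendsto_zero_iff_abs_tendsto_zero _).2
    (tendsto_zero_of_le_mul_add hκ (fun t => abs_nonneg (ρ t - 1)) hk he hstep) |>.add_const 1

end ScalarRecursion

section ProjectiveContraction

open scoped Matrix

variable {ι κ : Type*}

/-- `x` and `y` are proportional up to the factor `ρ`: for positive vectors this says that
Hilbert's projective distance `log max_{i,k} (x i / y i) / (x k / y k)` is at most `log ρ`.
The division-free form makes every vector operation below a one-line estimate. -/
def ProportionalUpTo (ρ : ℝ) (x y : ι → ℝ) : Prop :=
  ∀ i k, x i * y k ≤ ρ * (x k * y i)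

namespace ProportionalUpTo

variable {ρ σ : ℝ} {x y z : ι → ℝ}

lemma exists_of_pos [Finite ι] (hx : ∀ i, 0 < x i) (hy : ∀ i, 0 < y i) :
    ∃ ρ, ProportionalUpTo ρ x y := by
  obtain ⟨ρ, hρ⟩ := Finite.exists_le fun s : ι × ι => x s.1 * y s.2 / (x s.2 * y s.1)
  exact ⟨ρ, fun i k => (div_le_iff₀ (mul_pos (hx k) (hy i))).1 (hρ (i, k))⟩

lemma trans (hx : ∀ i, 0 ≤ x i) (hy : ∀ i, 0 < y i) (hz : ∀ i, 0 ≤ z i)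
    (hxy : ProportionalUpTo ρ x y) (hyz : ProportionalUpTo σ y z) :
    ProportionalUpTo (ρ * σ) x z := by
  intro i k
  have hxy_nonneg := (mul_nonneg (hx i) (hy k).le).trans (hxy i k)
  refine le_of_mul_le_mul_right ?_ (mul_pos (hy i) (hy k))
  calc x i * z k * (y i * y k) = x i * y k * (y i * z k) := by ring
    _ ≤ ρ * (x k * y i) * (σ * (y k * z i)) :=
      mul_le_mul (hxy i k) (hyz i k) (mul_nonneg (hy i).le (hz k)) hxy_nonneg
    _ = ρ * σ * (x k * z i) * (y i * y k) := by ring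

lemma mul_right (hz : ∀ i, 0 ≤ z i) (h : ProportionalUpTo ρ x y) :
    ProportionalUpTo ρ (x * z) (y * z) := by
  intro i k
  calc x i * z i * (y k * z k) = x i * y k * (z i * z k) := by ring
    _ ≤ ρ * (x k * y i) * (z i * z k) :=
      mul_le_mul_of_nonneg_right (h i k) (mul_nonneg (hz i) (hz k))
    _ = ρ * (x k * z k * (y i * z i)) := by ring

lemma inv (hx : ∀ i, 0 < x i) (hy : ∀ i, 0 < y i) (h : ProportionalUpTo ρ x y) :
    ProportionalUpTo ρ x⁻¹ y⁻¹ := by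
  intro i k
  have hxi := hx i
  have hxk := hx k
  have hyi := hy i
  have hyk := hy k
  calc (x i)⁻¹ * (y k)⁻¹ = x k * y i / (x i * x k * (y i * y k)) := by field_simp
    _ ≤ ρ * (x i * y k) / (x i * x k * (y i * y k)) :=
      div_le_div_of_nonneg_right (h k i) (by positivity)
    _ = ρ * ((x k)⁻¹ * (y i)⁻¹) := by field_simp

lemma le_mul_of_sum_eq [Fintype ι] (h : ProportionalUpTo ρ x y) (hsum : ∑ i, x i = ∑ i, y i)
    (hpos : 0 < ∑ i, y i) (i : ι) : x i ≤ ρ * y i ∧ y i ≤ ρ * x i := by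
  constructor <;> refine le_of_mul_le_mul_right ?_ hpos
  · calc x i * ∑ k, y k = ∑ k, x i * y k := mul_sum ..
      _ ≤ ∑ k, ρ * (x k * y i) := sum_le_sum fun k _ => h i k
      _ = ρ * y i * ∑ k, y k := by rw [← mul_sum, ← sum_mul, hsum]; ring
  · calc y i * ∑ k, y k = ∑ k, x k * y i := by rw [← hsum, mul_comm, sum_mul]
      _ ≤ ∑ k, ρ * (x i * y k) := sum_le_sum fun k _ => h k i
      _ = ρ * x i * ∑ k, y k := by rw [← mul_sum, ← mul_sum]; ring

end ProportionalUpTo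

variable [Fintype κ] {w ρ E : ℝ} {K K' : Matrix ι κ ℝ} {x y : κ → ℝ}

lemma mulVec_mono_left (hx : ∀ j, 0 ≤ x j) (hK : ∀ i j, K' i j ≤ E * K i j) (i : ι) :
    (K' *ᵥ x) i ≤ E * (K *ᵥ x) i := by
  simp only [Matrix.mulVec, dotProduct, mul_sum, ← mul_assoc]
  exact sum_le_sum fun j _ => mul_le_mul_of_nonneg_right (hK i j) (hx j)

lemma mulVec_pos [Nonempty κ] (hK : ∀ i j, 0 < K i j) (hx : ∀ j, 0 < x j) (i : ι) :
    0 < (K *ᵥ x) i :=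
  sum_pos (fun j _ => mul_pos (hK i j) (hx j)) univ_nonempty

lemma mul_mulVec_mul_mulVec_le (hcross : ∀ i j k l, w * (K k j * K i l) ≤ K i j * K k l)
    (hx : ∀ j, 0 ≤ x j) (hy : ∀ j, 0 ≤ y j) (i k : ι) :
    w * ((K *ᵥ x) k * (K *ᵥ y) i) ≤ (K *ᵥ x) i * (K *ᵥ y) k := by
  simp only [Matrix.mulVec, dotProduct]
  rw [sum_mul_sum, sum_mul_sum, mul_sum]
  simp only [mul_sum]
  refine sum_le_sum fun j _ => sum_le_sum fun l _ => ?_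
  linarith [mul_le_mul_of_nonneg_right (hcross i j k l) (mul_nonneg (hx j) (hy l))]

namespace ProportionalUpTo

/-- Birkhoff's contraction, obtained by applying the cross-ratio bound to the nonnegative vectors
`ρ lo y - x` and `y`, where `lo = min_j x j / y j`. -/
lemma mulVec (hK : ∀ i j, 0 ≤ K i j) (hw : w ≤ 1)
    (hcross : ∀ i j k l, w * (K k j * K i l) ≤ K i j * K k l)
    (hx : ∀ j, 0 < x j) (hy : ∀ j, 0 < y j) (h : ProportionalUpTo ρ x y) :
    ProportionalUpTo (1 + (1 - w) * (ρ - 1)) (K *ᵥ x) (K *ᵥ y) := by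
  intro i k
  rcases isEmpty_or_nonempty κ with hκ | hκ
  · simp [Matrix.mulVec, dotProduct]
  obtain ⟨j₀, hj₀⟩ := Finite.exists_min fun j => x j / y j
  set lo := x j₀ / y j₀ with hlo
  have hρ : 0 ≤ ρ := by
    have := mul_pos (hx j₀) (hy j₀)
    exact nonneg_of_mul_nonneg_left (this.le.trans (h j₀ j₀)) this
  have hlower (j : κ) : lo * y j ≤ x j := (le_div_iff₀ (hy j)).1 (hj₀ j)
  have hupper (j : κ) : 0 ≤ ((ρ * lo) • y - x) j := by
    refine sub_nonneg.2 (le_of_mul_le_mul_right ((h j j₀).trans_eq ?_) (hy j₀))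
    simp only [hlo, Pi.smul_apply, smul_eq_mul]
    field_simp [(hy j₀).ne']
  have hKlower : lo * (K *ᵥ y) k ≤ (K *ᵥ x) k := by
    simp only [Matrix.mulVec, dotProduct, mul_sum]
    exact sum_le_sum fun j _ => by linarith [mul_le_mul_of_nonneg_left (hlower j) (hK k j)]
  have hKy : 0 ≤ (K *ᵥ y) i := sum_nonneg fun j _ => mul_nonneg (hK i j) (hy j).le
  have hKupper := mul_mulVec_mul_mulVec_le hcross hupper (fun j => (hy j).le) i k
  simp only [Matrix.mulVec_sub, Matrix.mulVec_smul, Pi.sub_apply, Pi.smul_apply,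
    smul_eq_mul] at hKupper
  calc (K *ᵥ x) i * (K *ᵥ y) k
      ≤ w * ((K *ᵥ x) k * (K *ᵥ y) i) + (1 - w) * ρ * (K *ᵥ y) i * (lo * (K *ᵥ y) k) := by
        linarith
    _ ≤ w * ((K *ᵥ x) k * (K *ᵥ y) i) + (1 - w) * ρ * (K *ᵥ y) i * (K *ᵥ x) k := by
        have := sub_nonneg.2 hw
        gcongr
    _ = (1 + (1 - w) * (ρ - 1)) * ((K *ᵥ x) k * (K *ᵥ y) i) := by ring

lemma mulVec_of_le (hK : ∀ i j, 0 ≤ K i j) (hK' : ∀ i j, 0 ≤ K' i j)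
    (hle : ∀ i j, K' i j ≤ E * K i j) (hge : ∀ i j, K i j ≤ E * K' i j) (hx : ∀ j, 0 ≤ x j) :
    ProportionalUpTo (E ^ 2) (K' *ᵥ x) (K *ᵥ x) := by
  intro i k
  have hKx : 0 ≤ (K *ᵥ x) k := sum_nonneg fun j _ => mul_nonneg (hK k j) (hx j)
  have hKx' : 0 ≤ (K' *ᵥ x) i := sum_nonneg fun j _ => mul_nonneg (hK' i j) (hx j)
  have hi := mulVec_mono_left hx hle i
  calc (K' *ᵥ x) i * (K *ᵥ x) k
      ≤ E * (K *ᵥ x) i * (E * (K' *ᵥ x) k) :=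
        mul_le_mul hi (mulVec_mono_left hx hge k) hKx (hKx'.trans hi)
    _ = E ^ 2 * ((K' *ᵥ x) k * (K *ᵥ x) i) := by ring

lemma div_mulVec [Nonempty κ] {p : ι → ℝ} (hp : ∀ i, 0 ≤ p i)
    (hK : ∀ i j, 0 < K i j) (hK' : ∀ i j, 0 < K' i j)
    (hle : ∀ i j, K' i j ≤ E * K i j) (hge : ∀ i j, K i j ≤ E * K' i j) (hw : w ≤ 1)
    (hcross : ∀ i j k l, w * (K k j * K i l) ≤ K i j * K k l)
    (hx : ∀ j, 0 < x j) (hy : ∀ j, 0 < y j) (h : ProportionalUpTo ρ x y) :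
    ProportionalUpTo (E ^ 2 * (1 + (1 - w) * (ρ - 1))) (p / (K' *ᵥ x)) (p / (K *ᵥ y)) := by
  have hKx := mulVec_pos hK hx
  have hKy := mulVec_pos hK hy
  have hKx' := mulVec_pos hK' hx
  have hperturb : ProportionalUpTo (E ^ 2) (K' *ᵥ x) (K *ᵥ x) :=
    mulVec_of_le (fun i j => (hK i j).le) (fun i j => (hK' i j).le) hle hge fun j => (hx j).le
  have hcontract := h.mulVec (fun i j => (hK i j).le) hw hcross hx hy
  simpa only [div_eq_inv_mul] using (((hperturb.trans (fun i => (hKx' i).le) hKx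
    (fun i => (hKy i).le) hcontract).inv hKx' hKy).mul_right hp)

end ProportionalUpTo

end ProjectiveContraction

section Gibbs

variable {m n : ℕ} {c : Matrix (Fin m) (Fin n) ℝ} {M : ℝ}

lemma gibbs_pos (c : Matrix (Fin m) (Fin n) ℝ) (β : ℝ) (i : Fin m) (j : Fin n) :
    0 < gibbs c β i j :=
  Real.exp_pos _

lemma tendsto_gibbs {α : Type*} {l : Filter α} {β : α → ℝ} {βinf : ℝ}
    (hβ : Tendsto β l (𝓝 βinf)) (i : Fin m) (j : Fin n) :
    Tendsto (fun t => gibbs c (β t) i j) l (𝓝 (gibbs c βinf i j)) :=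
  (Real.continuous_exp.tendsto _).comp (hβ.mul_const (c i j)).neg

lemma gibbs_le_exp_mul_gibbs (hM : ∀ i j, |c i j| ≤ M) (β β' : ℝ) (i : Fin m) (j : Fin n) :
    gibbs c β' i j ≤ Real.exp (|β' - β| * M) * gibbs c β i j := by
  have hdiff : -((β' - β) * c i j) ≤ |β' - β| * M :=
    calc -((β' - β) * c i j) ≤ |β' - β| * |c i j| := abs_mul (β' - β) (c i j) ▸ neg_le_abs _
      _ ≤ |β' - β| * M := mul_le_mul_of_nonneg_left (hM i j) (abs_nonneg _)
  rw [gibbs, gibbs, ← Real.exp_add, Real.exp_le_exp]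
  linarith

lemma exp_mul_gibbs_mul_gibbs_le {β B : ℝ} (hM : ∀ i j, |c i j| ≤ M) (hB : |β| ≤ B)
    (i : Fin m) (j : Fin n) (k : Fin m) (l : Fin n) :
    Real.exp (-(4 * (B * M))) * (gibbs c β k j * gibbs c β i l) ≤
      gibbs c β i j * gibbs c β k l := by
  have hbound (i : Fin m) (j : Fin n) : |β * c i j| ≤ B * M := by
    rw [abs_mul]
    exact mul_le_mul hB (hM i j) (abs_nonneg _) ((abs_nonneg _).trans hB)
  simp only [gibbs, ← Real.exp_add, Real.exp_le_exp]
  linarith [abs_le.1 (hbound i j), abs_le.1 (hbound k l), abs_le.1 (hbound k j),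
    abs_le.1 (hbound i l)]

/-- `π` has the cross ratios of `e^{-βc}`. This is the closed condition obtained from
`π = diag(a) e^{-βc} diag(b)` by eliminating the scalings, so that it survives limits along which
the scalings are not known to converge. -/
def HasGibbsCrossRatios (c : Matrix (Fin m) (Fin n) ℝ) (β : ℝ) (π : Matrix (Fin m) (Fin n) ℝ) :
    Prop :=
  ∀ i j k l, π i j * π k l * (gibbs c β i l * gibbs c β k j) =
    π i l * π k j * (gibbs c β i j * gibbs c β k l)

namespace HasGibbsCrossRatios

variable {β : ℝ} {π : Matrix (Fin m) (Fin n) ℝ}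

lemma of_scaling (a : Fin m → ℝ) (b : Fin n → ℝ) :
    HasGibbsCrossRatios c β fun i j => a i * gibbs c β i j * b j :=
  fun i j k l => by ring

lemma of_tendsto {α : Type*} {l : Filter α} [l.NeBot] {πs : α → Matrix (Fin m) (Fin n) ℝ}
    {βs : α → ℝ} (hβ : Tendsto βs l (𝓝 β)) (hπ : ∀ i j, Tendsto (πs · i j) l (𝓝 (π i j)))
    (h : ∀ t, HasGibbsCrossRatios c (βs t) (πs t)) : HasGibbsCrossRatios c β π := fun i j k o =>
  tendsto_nhds_unique
    (((hπ i j).mul (hπ k o)).mul ((tendsto_gibbs hβ i o).mul (tendsto_gibbs hβ k j)))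
    ((((hπ i o).mul (hπ k j)).mul ((tendsto_gibbs hβ i j).mul (tendsto_gibbs hβ k o))).congr
      fun t => (h t i j k o).symm)

/-- If `π i j = 0` then `π i l * π k j = 0` for all `k`, `l`, so row `i` or column `j` vanishes. -/
lemma pos (h : HasGibbsCrossRatios c β π) (hπ : ∀ i j, 0 ≤ π i j)
    (hrow : ∀ i, 0 < rowSum π i) (hcol : ∀ j, 0 < colSum π j) (i : Fin m) (j : Fin n) :
    0 < π i j := by
  obtain ⟨l, -, hl⟩ : ∃ l ∈ univ, 0 < π i l :=
    exists_lt_of_sum_lt (sum_const_zero.trans_lt (hrow i))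
  obtain ⟨k, -, hk⟩ : ∃ k ∈ univ, 0 < π k j :=
    exists_lt_of_sum_lt (sum_const_zero.trans_lt (hcol j))
  refine (hπ i j).lt_of_ne' fun hzero => ?_
  have hcross := h i j k l
  rw [hzero, zero_mul, zero_mul] at hcross
  exact (mul_pos (mul_pos hl hk) (mul_pos (gibbs_pos c β i j) (gibbs_pos c β k l))).ne hcross

lemma exists_eq_exp [NeZero m] [NeZero n] (h : HasGibbsCrossRatios c β π)
    (hπ : ∀ i j, 0 < π i j) :
    ∃ (u : Fin m → ℝ) (v : Fin n → ℝ), ∀ i j, π i j = Real.exp (u i + v j - β * c i j) := by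
  refine ⟨fun i => Real.log (π i 0) + β * c i 0,
    fun j => Real.log (π 0 j) + β * c 0 j - Real.log (π 0 0) - β * c 0 0, fun i j => ?_⟩
  have hexp (i : Fin m) (j : Fin n) : π i j = Real.exp (Real.log (π i j)) :=
    (Real.exp_log (hπ i j)).symm
  have hlog := h i j 0 0
  rw [hexp i j, hexp 0 0, hexp i 0, hexp 0 j] at hlog
  simp only [gibbs, ← Real.exp_add, Real.exp_eq_exp] at hlog
  rw [hexp i j, Real.exp_eq_exp]
  linarith

end HasGibbsCrossRatios

end Gibbs

section EntropicTransport

variable {m n : ℕ} {p : Fin m → ℝ} {q : Fin n → ℝ} {c π π' : Matrix (Fin m) (Fin n) ℝ} {β : ℝ}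

lemma KLmat_pos (hπ : ∀ i j, 0 ≤ π i j) (hπ' : ∀ i j, 0 < π' i j) (hne : π ≠ π') :
    0 < KLmat π π' := by
  have hterm (i : Fin m) (j : Fin n) :
      π i j * Real.log (π i j / π' i j) - π i j + π' i j =
        π' i j * InformationTheory.klFun (π i j / π' i j) := by
    rw [InformationTheory.klFun_apply]
    field_simp [(hπ' i j).ne']
    ring
  have hratio (i : Fin m) (j : Fin n) : 0 ≤ π i j / π' i j := div_nonneg (hπ i j) (hπ' i j).le
  have hnonneg (i : Fin m) (j : Fin n) :
      0 ≤ π' i j * InformationTheory.klFun (π i j / π' i j) :=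
    mul_nonneg (hπ' i j).le (InformationTheory.klFun_nonneg (hratio i j))
  obtain ⟨i, j, hij⟩ : ∃ i j, π i j ≠ π' i j := by
    by_contra! heq
    exact hne (Matrix.ext heq)
  have hpos : 0 < π' i j * InformationTheory.klFun (π i j / π' i j) := by
    refine (hnonneg i j).lt_of_ne' (mul_ne_zero (hπ' i j).ne' fun hzero => hij ?_)
    rwa [InformationTheory.klFun_eq_zero_iff (hratio i j), div_eq_one_iff_eq (hπ' i j).ne'] at hzero
  simp only [KLmat, hterm]
  exact sum_pos' (fun i _ => sum_nonneg fun j _ => hnonneg i j)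
    ⟨i, mem_univ i, sum_pos' (fun j _ => hnonneg i j) ⟨j, mem_univ j, hpos⟩⟩

lemma sum_mul_add_eq_marginals (π : Matrix (Fin m) (Fin n) ℝ) (u : Fin m → ℝ) (v : Fin n → ℝ) :
    ∑ i, ∑ j, π i j * (u i + v j) = ∑ i, rowSum π i * u i + ∑ j, colSum π j * v j := by
  simp only [mul_add, sum_add_distrib, rowSum, colSum, sum_mul]
  rw [sum_comm (f := fun i j => π i j * v j)]

lemma mul_eotObj_eq_KLmat_add {u : Fin m → ℝ} {v : Fin n → ℝ} (hβ : β ≠ 0)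
    (hπ : ∀ i j, π i j = Real.exp (u i + v j - β * c i j)) (π' : Matrix (Fin m) (Fin n) ℝ) :
    β * eotObj c β π' = KLmat π' π +
      (∑ i, rowSum π' i * (u i - Real.log (1 / (m * n))) + ∑ j, colSum π' j * v j) +
      ∑ i, ∑ j, (piRef m n i j - π i j) := by
  rw [← sum_mul_add_eq_marginals, eotObj, mul_add, mul_inv_cancel_left₀ hβ, frob, KLmat, KLmat]
  simp only [mul_sum, ← sum_add_distrib]
  refine sum_congr rfl fun i _ => sum_congr rfl fun j _ => ?_
  rcases eq_or_ne (π' i j) 0 with hzero | hne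
  · simp [hzero]
  have hm : (m : ℝ) ≠ 0 := Nat.cast_ne_zero.2 i.pos.ne'
  have hn : (n : ℝ) ≠ 0 := Nat.cast_ne_zero.2 j.pos.ne'
  rw [hπ, piRef, Real.log_div hne (one_div_ne_zero (mul_ne_zero hm hn)),
    Real.log_div hne (Real.exp_ne_zero _), Real.log_exp]
  ring

lemma eotObj_eq_add_KLmat {u : Fin m → ℝ} {v : Fin n → ℝ} (hβ : β ≠ 0)
    (hπ : ∀ i j, π i j = Real.exp (u i + v j - β * c i j)) (hrow : rowSum π' = rowSum π)
    (hcol : colSum π' = colSum π) :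
    eotObj c β π' = eotObj c β π + β⁻¹ * KLmat π' π := by
  have hself : KLmat π π = 0 := by
    simp [KLmat, hπ, Real.exp_ne_zero]
  have hπ_obj := mul_eotObj_eq_KLmat_add hβ hπ π
  have hπ'_obj := mul_eotObj_eq_KLmat_add hβ hπ π'
  rw [hrow, hcol] at hπ'_obj
  refine mul_left_cancel₀ hβ ?_
  rw [mul_add, mul_inv_cancel_left₀ hβ]
  linarith

lemma HasGibbsCrossRatios.eotObj_lt [NeZero m] [NeZero n] (hβ : 0 < β) (hp : ∀ i, 0 < p i)
    (hq : ∀ j, 0 < q j) (h : HasGibbsCrossRatios c β π) (hπ : π ∈ Gamma p q)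
    (hπ' : π' ∈ Gamma p q) (hne : π' ≠ π) : eotObj c β π < eotObj c β π' := by
  obtain ⟨hπ_nonneg, hπ_row, hπ_col⟩ := hπ
  obtain ⟨hπ'_nonneg, hπ'_row, hπ'_col⟩ := hπ'
  have hπ_pos : ∀ i j, 0 < π i j := h.pos hπ_nonneg (hπ_row ▸ hp) (hπ_col ▸ hq)
  obtain ⟨u, v, hexp⟩ := h.exists_eq_exp hπ_pos
  rw [eotObj_eq_add_KLmat hβ.ne' hexp (hπ'_row.trans hπ_row.symm) (hπ'_col.trans hπ_col.symm)]
  exact lt_add_of_pos_right _ (mul_pos (inv_pos.2 hβ) (KLmat_pos hπ'_nonneg hπ_pos hne))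

lemma HasGibbsCrossRatios.eq_of_mem_Gamma [NeZero m] [NeZero n] (hβ : 0 < β)
    (hp : ∀ i, 0 < p i) (hq : ∀ j, 0 < q j) (h : HasGibbsCrossRatios c β π) (hπ : π ∈ Gamma p q)
    (h' : HasGibbsCrossRatios c β π') (hπ' : π' ∈ Gamma p q) : π' = π := by
  by_contra hne
  exact lt_asymm (h.eotObj_lt hβ hp hq hπ hπ' hne) (h'.eotObj_lt hβ hp hq hπ' hπ (Ne.symm hne))

end EntropicTransport

section AnnealedSinkhorn

open scoped Matrix

variable {m n : ℕ} {p : Fin m → ℝ} {q : Fin n → ℝ} {c : Matrix (Fin m) (Fin n) ℝ}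
  {β : ℕ → ℝ} {βinf : ℝ}

lemma sinkAB_snd_succ (t : ℕ) :
    (sinkAB p q c β (t + 1)).2 = q / ((gibbs c (β (t + 1)))ᵀ *ᵥ (sinkAB p q c β (t + 1)).1) :=
  rfl

lemma hasGibbsCrossRatios_sinkPlan (t : ℕ) :
    HasGibbsCrossRatios c (β t) (sinkPlan p q c β t) :=
  .of_scaling _ _

lemma rowSum_sinkPlan (t : ℕ) :
    rowSum (sinkPlan p q c β t) =
      (sinkAB p q c β t).1 * (gibbs c (β t) *ᵥ (sinkAB p q c β t).2) := by
  ext i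
  simp only [rowSum, sinkPlan, mul_assoc, ← mul_sum]
  rfl

variable [NeZero m] [NeZero n]

lemma sinkAB_pos (hp : ∀ i, 0 < p i) (hq : ∀ j, 0 < q j) (t : ℕ) :
    (∀ i, 0 < (sinkAB p q c β t).1 i) ∧ ∀ j, 0 < (sinkAB p q c β t).2 j := by
  induction t with
  | zero => exact ⟨fun _ => one_pos, fun _ => one_pos⟩
  | succ t ih =>
    have ha (i : Fin m) : 0 < (sinkAB p q c β (t + 1)).1 i :=
      div_pos (hp i) (mulVec_pos (gibbs_pos c (β t)) ih.2 i)
    exact ⟨ha, fun j => div_pos (hq j) (mulVec_pos (fun j i => gibbs_pos c (β (t + 1)) i j) ha j)⟩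

lemma sinkPlan_pos (hp : ∀ i, 0 < p i) (hq : ∀ j, 0 < q j) (t : ℕ) (i : Fin m) (j : Fin n) :
    0 < sinkPlan p q c β t i j :=
  mul_pos (mul_pos ((sinkAB_pos hp hq t).1 i) (gibbs_pos c (β t) i j)) ((sinkAB_pos hp hq t).2 j)

lemma colSum_sinkPlan_succ (hp : ∀ i, 0 < p i) (hq : ∀ j, 0 < q j) (t : ℕ) :
    colSum (sinkPlan p q c β (t + 1)) = q := by
  ext j
  have hpos : 0 < ((gibbs c (β (t + 1)))ᵀ *ᵥ (sinkAB p q c β (t + 1)).1) j :=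
    mulVec_pos (fun j i => gibbs_pos c (β (t + 1)) i j) (sinkAB_pos hp hq (t + 1)).1 j
  calc colSum (sinkPlan p q c β (t + 1)) j
      = ((gibbs c (β (t + 1)))ᵀ *ᵥ (sinkAB p q c β (t + 1)).1) j *
          (sinkAB p q c β (t + 1)).2 j := by
        simp only [colSum, sinkPlan, ← sum_mul, Matrix.mulVec, dotProduct, Matrix.transpose_apply,
          mul_comm]
    _ = q j := by rw [sinkAB_snd_succ]; exact mul_div_cancel₀ _ hpos.ne'

lemma sum_rowSum_sinkPlan_succ (hp : ∀ i, 0 < p i) (hq : ∀ j, 0 < q j) (t : ℕ) :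
    ∑ i, rowSum (sinkPlan p q c β (t + 1)) i = ∑ j, q j :=
  calc ∑ i, rowSum (sinkPlan p q c β (t + 1)) i = ∑ j, colSum (sinkPlan p q c β (t + 1)) j :=
        sum_comm
    _ = ∑ j, q j := by rw [colSum_sinkPlan_succ hp hq]

lemma ProportionalUpTo.sinkAB_succ {M B ρ : ℝ} (hp : ∀ i, 0 < p i) (hq : ∀ j, 0 < q j)
    (hM : ∀ i j, |c i j| ≤ M) (hB : ∀ t, |β t| ≤ B) {t : ℕ}
    (h : ProportionalUpTo ρ (sinkAB p q c β (t + 2)).1 (sinkAB p q c β (t + 1)).1) :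
    ProportionalUpTo
      (Real.exp (4 * (|β (t + 2) - β (t + 1)| * M)) *
        (1 + (1 - Real.exp (-(4 * (B * M)))) * (ρ - 1)))
      (sinkAB p q c β (t + 3)).1 (sinkAB p q c β (t + 2)).1 := by
  have hBM : 0 ≤ B * M :=
    mul_nonneg ((abs_nonneg _).trans (hB 0)) ((abs_nonneg _).trans (hM 0 0))
  have hw : Real.exp (-(4 * (B * M))) ≤ 1 := Real.exp_le_one_iff.2 (by linarith)
  have hle := gibbs_le_exp_mul_gibbs hM (β (t + 1)) (β (t + 2))
  have hge := gibbs_le_exp_mul_gibbs hM (β (t + 2)) (β (t + 1))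
  rw [abs_sub_comm] at hge
  have hb : ProportionalUpTo _ (sinkAB p q c β (t + 2)).2 (sinkAB p q c β (t + 1)).2 :=
    h.div_mulVec (p := q) (K := (gibbs c (β (t + 1)))ᵀ) (K' := (gibbs c (β (t + 2)))ᵀ)
      (fun j => (hq j).le) (fun j i => gibbs_pos c _ i j) (fun j i => gibbs_pos c _ i j)
      (fun j i => hle i j) (fun j i => hge i j) hw
      (fun i j k l => (mul_comm (gibbs c (β (t + 1)) j k) _ ▸
        exp_mul_gibbs_mul_gibbs_le hM (hB (t + 1)) j i l k))
      (sinkAB_pos hp hq (t + 2)).1 (sinkAB_pos hp hq (t + 1)).1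
  have ha : ProportionalUpTo _ (sinkAB p q c β (t + 3)).1 (sinkAB p q c β (t + 2)).1 :=
    hb.div_mulVec (w := 0) (fun i => (hp i).le) (gibbs_pos c (β (t + 1))) (gibbs_pos c (β (t + 2)))
      hle hge zero_le_one
      (fun i j k l => (zero_mul _).trans_le (mul_pos (gibbs_pos c _ i j) (gibbs_pos c _ k l)).le)
      (sinkAB_pos hp hq (t + 2)).2 (sinkAB_pos hp hq (t + 1)).2
  convert ha using 1
  have hexp (s : ℝ) : Real.exp (4 * s) = Real.exp s ^ 2 * Real.exp s ^ 2 := by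
    rw [← pow_add, ← Real.exp_nat_mul]
    norm_num
  rw [hexp]
  ring

lemma exists_tendsto_one_proportionalUpTo_sinkAB (hp : ∀ i, 0 < p i) (hq : ∀ j, 0 < q j)
    (hβ : Tendsto β atTop (𝓝 βinf)) :
    ∃ ρ : ℕ → ℝ, Tendsto ρ atTop (𝓝 1) ∧
      ∀ t, ProportionalUpTo (ρ t) (sinkAB p q c β (t + 2)).1 (sinkAB p q c β (t + 1)).1 := by
  obtain ⟨M, hM⟩ := Finite.exists_le fun s : Fin m × Fin n => |c s.1 s.2|
  obtain ⟨B, hB⟩ := (Metric.isBounded_range_of_tendsto β hβ).exists_norm_le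
  replace hM (i : Fin m) (j : Fin n) : |c i j| ≤ M := hM (i, j)
  replace hB (t : ℕ) : |β t| ≤ B := hB (β t) ⟨t, rfl⟩
  obtain ⟨ρ₀, hρ₀⟩ := ProportionalUpTo.exists_of_pos
    (sinkAB_pos (c := c) (β := β) hp hq 2).1 (sinkAB_pos hp hq 1).1
  let F (t : ℕ) := Real.exp (4 * (|β (t + 2) - β (t + 1)| * M))
  let κ := 1 - Real.exp (-(4 * (B * M)))
  let ρ (t : ℕ) : ℝ := t.rec ρ₀ fun t r => F t * (1 + κ * (r - 1))
  have hκ : |κ| < 1 := by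
    have hBM : 0 ≤ B * M :=
      mul_nonneg ((abs_nonneg _).trans (hB 0)) ((abs_nonneg _).trans (hM 0 0))
    have hexp_le : Real.exp (-(4 * (B * M))) ≤ 1 := Real.exp_le_one_iff.2 (by linarith)
    rw [abs_of_nonneg (sub_nonneg.2 hexp_le)]
    exact sub_lt_self 1 (Real.exp_pos _)
  have hF : Tendsto F atTop (𝓝 1) := by
    have hβ' (s : ℕ) := (tendsto_add_atTop_iff_nat s).2 hβ
    simpa [F, Function.comp_def] using
      (Real.continuous_exp.tendsto _).comp ((((hβ' 2).sub (hβ' 1)).abs.mul_const M).const_mul 4)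
  refine ⟨ρ, tendsto_one_of_relaxation hκ hF fun _ => rfl, fun t => ?_⟩
  induction t with
  | zero => exact hρ₀
  | succ t ih => exact ih.sinkAB_succ hp hq hM hB

lemma tendsto_rowSum_sinkPlan (hp : ∀ i, 0 < p i) (hq : ∀ j, 0 < q j)
    (hpq : ∑ i, p i = ∑ j, q j) (hβ : Tendsto β atTop (𝓝 βinf)) :
    Tendsto (fun t => rowSum (sinkPlan p q c β t)) atTop (𝓝 p) := by
  obtain ⟨ρ, hρ, hprop⟩ := exists_tendsto_one_proportionalUpTo_sinkAB (c := c) hp hq hβ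
  have hrow (t : ℕ) : ProportionalUpTo (ρ t) p (rowSum (sinkPlan p q c β (t + 1))) := by
    have hKb := mulVec_pos (gibbs_pos c (β (t + 1))) (sinkAB_pos (c := c) (β := β) hp hq (t + 1)).2
    have hp_eq : (sinkAB p q c β (t + 2)).1 *
        (gibbs c (β (t + 1)) *ᵥ (sinkAB p q c β (t + 1)).2) = p :=
      funext fun i => div_mul_cancel₀ _ (hKb i).ne'
    simpa only [hp_eq, ← rowSum_sinkPlan] using (hprop t).mul_right fun i => (hKb i).le
  have hmass (t : ℕ) : ∑ i, rowSum (sinkPlan p q c β (t + 1)) i = ∑ i, p i :=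
    (sum_rowSum_sinkPlan_succ hp hq t).trans hpq.symm
  have hbounds (t : ℕ) (i : Fin m) := (hrow t).le_mul_of_sum_eq (hmass t).symm
    ((hmass t).symm ▸ sum_pos (fun i _ => hp i) univ_nonempty) i
  refine (tendsto_add_atTop_iff_nat 1).1 (tendsto_pi_nhds.2 fun i => ?_)
  have hlower : Tendsto (fun t => (ρ t)⁻¹ * p i) atTop (𝓝 (p i)) := by
    simpa using (hρ.inv₀ one_ne_zero).mul_const (p i)
  have hupper : Tendsto (fun t => ρ t * p i) atTop (𝓝 (p i)) := by
    simpa using hρ.mul_const (p i)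
  refine tendsto_of_tendsto_of_tendsto_of_le_of_le' hlower hupper ?_
    (.of_forall fun t => (hbounds t i).2)
  filter_upwards [hρ.eventually_const_lt one_pos] with t hρ_pos
  exact (inv_mul_le_iff₀ hρ_pos).2 (hbounds t i).1

lemma sinkPlan_succ_mem_Icc (hp : ∀ i, 0 < p i) (hq : ∀ j, 0 < q j) (t : ℕ) :
    sinkPlan p q c β (t + 1) ∈ (Set.Icc 0 fun _ => q : Set (Fin m → Fin n → ℝ)) := by
  refine ⟨fun i j => (sinkPlan_pos hp hq (t + 1) i j).le, fun i j => ?_⟩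
  calc sinkPlan p q c β (t + 1) i j ≤ colSum (sinkPlan p q c β (t + 1)) j :=
        single_le_sum (fun k _ => (sinkPlan_pos hp hq (t + 1) k j).le) (mem_univ i)
    _ = q j := by rw [colSum_sinkPlan_succ hp hq]

lemma mem_Gamma_and_hasGibbsCrossRatios_of_mapClusterPt (hp : ∀ i, 0 < p i) (hq : ∀ j, 0 < q j)
    (hpq : ∑ i, p i = ∑ j, q j) (hβ : Tendsto β atTop (𝓝 βinf)) {π : Matrix (Fin m) (Fin n) ℝ}
    (hπ : MapClusterPt π atTop (sinkPlan p q c β)) :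
    π ∈ Gamma p q ∧ HasGibbsCrossRatios c βinf π := by
  obtain ⟨U, hU, hlim⟩ := mapClusterPt_iff_ultrafilter.1 hπ
  have hentry (i : Fin m) (j : Fin n) :
      Tendsto (fun t => sinkPlan p q c β t i j) U (𝓝 (π i j)) :=
    tendsto_pi_nhds.1 (tendsto_pi_nhds.1 hlim i) j
  have hrow : Tendsto (fun t => rowSum (sinkPlan p q c β t)) U (𝓝 (rowSum π)) :=
    tendsto_pi_nhds.2 fun i => tendsto_finsetSum _ fun j _ => hentry i j
  have hcol : Tendsto (fun t => colSum (sinkPlan p q c β t)) U (𝓝 (colSum π)) :=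
    tendsto_pi_nhds.2 fun j => tendsto_finsetSum _ fun i _ => hentry i j
  have hcolq : Tendsto (fun t => colSum (sinkPlan p q c β t)) atTop (𝓝 q) :=
    (tendsto_add_atTop_iff_nat 1).1 <|
      tendsto_const_nhds.congr fun t => (colSum_sinkPlan_succ hp hq t).symm
  exact ⟨⟨fun i j => ge_of_tendsto' (hentry i j) fun t => (sinkPlan_pos hp hq t i j).le,
      tendsto_nhds_unique hrow ((tendsto_rowSum_sinkPlan hp hq hpq hβ).mono_left hU),
      tendsto_nhds_unique hcol (hcolq.mono_left hU)⟩,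
    .of_tendsto (hβ.mono_left hU) hentry hasGibbsCrossRatios_sinkPlan⟩

theorem annealed_sinkhorn_finite_limit_general (hp : ∀ i, 0 < p i) (hq : ∀ j, 0 < q j)
    (hpq : ∑ i, p i = ∑ j, q j) (hβinf : 0 < βinf) (hβ : Tendsto β atTop (𝓝 βinf)) :
    ∃ πinf ∈ Gamma p q,
      (∀ π' ∈ Gamma p q, π' ≠ πinf → eotObj c βinf πinf < eotObj c βinf π') ∧
        Tendsto (sinkPlan p q c β) atTop (𝓝 πinf) := by
  have hcompact : IsCompact (Set.Icc 0 fun _ => q : Set (Fin m → Fin n → ℝ)) := isCompact_Icc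
  have hmem : ∀ᶠ t in atTop, sinkPlan p q c β t ∈
      (Set.Icc 0 fun _ => q : Set (Fin m → Fin n → ℝ)) :=
    eventually_atTop.2 ⟨1, fun t ht => Nat.sub_add_cancel ht ▸ sinkPlan_succ_mem_Icc hp hq _⟩
  obtain ⟨πinf, -, hcluster⟩ := hcompact.exists_mapClusterPt_of_frequently hmem.frequently
  obtain ⟨hΓ, hcross⟩ :=
    mem_Gamma_and_hasGibbsCrossRatios_of_mapClusterPt hp hq hpq hβ hcluster
  refine ⟨πinf, hΓ, fun π' hπ' hne => hcross.eotObj_lt hβinf hp hq hΓ hπ' hne,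
    hcompact.tendsto_nhds_of_unique_mapClusterPt hmem fun π _ hπ => ?_⟩
  obtain ⟨hΓ', hcross'⟩ := mem_Gamma_and_hasGibbsCrossRatios_of_mapClusterPt hp hq hpq hβ hπ
  exact hcross.eq_of_mem_Gamma hβinf hp hq hΓ hcross' hΓ'

end AnnealedSinkhorn

lemma neZero_of_mem_simplexPos {k : ℕ} {p : Fin k → ℝ} (hp : p ∈ simplexPos k) : NeZero k :=
  ⟨by rintro rfl; simpa using hp.2⟩

/-- For a positive, nondecreasing, concave annealing schedule with finite
limit `β_∞`, the Annealed Sinkhorn iterates converge to the unique minimizer of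
`EOT_{β_∞}(p,q)`. -/
theorem annealed_sinkhorn_finite_limit
    {m n : ℕ} (p : Fin m → ℝ) (q : Fin n → ℝ) (c : Matrix (Fin m) (Fin n) ℝ)
    (hp : p ∈ simplexPos m) (hq : q ∈ simplexPos n)
    (β : ℕ → ℝ) (hβpos : ∀ t, 0 < β t) (hβmono : Monotone β)
    (hβconc : ∀ t, β (t + 2) - β (t + 1) ≤ β (t + 1) - β t)
    (βinf : ℝ) (hβinf : Tendsto β atTop (𝓝 βinf)) :
    ∃ πinf ∈ Gamma p q,
      (∀ π' ∈ Gamma p q, π' ≠ πinf → eotObj c βinf πinf < eotObj c βinf π') ∧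
        Tendsto (sinkPlan p q c β) atTop (𝓝 πinf) := by
  have := neZero_of_mem_simplexPos hp
  have := neZero_of_mem_simplexPos hq
  exact annealed_sinkhorn_finite_limit_general hp.1 hq.1 (hp.2.trans hq.2.symm)
    ((hβpos 0).trans_le (hβmono.ge_of_tendsto hβinf 0)) hβinf

end
end

section
/- Let p ∈ Δ*_m, q ∈ Δ*_n, c ∈ ℝ^{m×n} and β > 0. Let (π_t) be the iterates of the standard Sinkhorn algorithm at fixed inverse temperature β (i.e. Annealed Sinkhorn with constant schedule β_t = β). Then for every t ≥ 1: KL(π_t𝟙 | p) ≤ (inf_{π ∈ Γ(p,q)} KL(π | π_0)) / t. -/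
open Finset Filter Topology ENNReal

noncomputable section

/-!
A Sinkhorn iteration rescales the rows of the current plan to have sums `p` and then its columns to
have sums `q`. The chain rule

  `KL(P | A) = KL(P | A') + KL(P𝟙 | A𝟙)`, where `A'` is `A` with its rows rescaled to `P𝟙`,

contains everything: nonnegativity of its first term is the data-processing inequality, and for
`P𝟙 = p` it says that a rescaling brings the plan closer to `P` by exactly the marginal error it
repairs. Let `B` be the plan after the row rescaling of `A` and `C` the plan after the column
rescaling of `B`. For `P ∈ Γ(p, q)` the divergence from `P` drops by
`KL(p | A𝟙) + KL(q | Bᵀ𝟙)`, and `KL(C𝟙 | p) ≤ KL(C | B) = KL(q | Bᵀ𝟙)` by data processing. Summing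
over the iterations, the marginal errors `KL(π_s𝟙 | p)` for `1 ≤ s ≤ t` add up to at most
`KL(P | π_0)`. They are also antitone, since `Aᵀ𝟙 = q` gives
`KL(q | Bᵀ𝟙) ≤ KL(A | B) = KL(A𝟙 | p)`, so the last one is at most `KL(P | π_0) / t`.
-/

section Sinkhorn

open scoped Matrix

variable {m n k : ℕ} {A B P : Matrix (Fin m) (Fin n) ℝ} {p p' : Fin m → ℝ} {q : Fin n → ℝ}

/-- Absolute continuity `a ≪ b` of vectors. Since `log (x / 0) = 0` in Lean, `KLvec a b` is the
Kullback–Leibler divergence (rather than a junk value in place of `∞`) only under this condition. -/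
def AbsContVec (a b : Fin k → ℝ) : Prop := ∀ i, b i = 0 → a i = 0

/-- Absolute continuity `A ≪ B` of matrices; it plays for `KLmat` the role that `AbsContVec` plays
for `KLvec`. -/
def AbsContMat (A B : Matrix (Fin m) (Fin n) ℝ) : Prop := ∀ i j, B i j = 0 → A i j = 0

/-- Rescaling of the rows of `A` to the row sums `p`, the KL projection onto `{π | π𝟙 = p}`.
A row of sum zero is sent to zero. -/
def rowScale (p : Fin m → ℝ) (A : Matrix (Fin m) (Fin n) ℝ) : Matrix (Fin m) (Fin n) ℝ :=
  fun i j => p i / rowSum A i * A i j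

/-- Rescaling of the columns of `A` to the column sums `q`, defined through the transpose so that
its properties are those of `rowScale`. -/
def colScale (q : Fin n → ℝ) (A : Matrix (Fin m) (Fin n) ℝ) : Matrix (Fin m) (Fin n) ℝ :=
  (rowScale q Aᵀ)ᵀ

/-- One full Sinkhorn iteration on plans: row rescaling followed by column rescaling. -/
def sinkhornStep (p : Fin m → ℝ) (q : Fin n → ℝ) (A : Matrix (Fin m) (Fin n) ℝ) :
    Matrix (Fin m) (Fin n) ℝ :=
  colScale q (rowScale p A)

/-- The plan `diag(a) K diag(b)`, the form in which `sinkPlan` gives the iterates. -/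
def scaling (K : Matrix (Fin m) (Fin n) ℝ) (a : Fin m → ℝ) (b : Fin n → ℝ) :
    Matrix (Fin m) (Fin n) ℝ :=
  fun i j => a i * K i j * b j

/-! ### Row sums and rescalings -/

lemma rowSum_nonneg (hA : ∀ i j, 0 ≤ A i j) (i : Fin m) : 0 ≤ rowSum A i :=
  sum_nonneg fun j _ => hA i j

lemma eq_zero_of_rowSum_eq_zero (hA : ∀ i j, 0 ≤ A i j) {i : Fin m} (hi : rowSum A i = 0)
    (j : Fin n) : A i j = 0 :=
  (sum_eq_zero_iff_of_nonneg fun j _ => hA i j).1 hi j (mem_univ j)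

lemma AbsContMat.transpose (h : AbsContMat A B) : AbsContMat Aᵀ Bᵀ := fun j i => h i j

lemma AbsContMat.absContVec_rowSum (hB : ∀ i j, 0 ≤ B i j) (h : AbsContMat A B) :
    AbsContVec (rowSum A) (rowSum B) :=
  fun i hi => sum_eq_zero fun j _ => h i j (eq_zero_of_rowSum_eq_zero hB hi j)

lemma AbsContMat.absContVec_colSum (hB : ∀ i j, 0 ≤ B i j) (h : AbsContMat A B) :
    AbsContVec (colSum A) (colSum B) :=
  h.transpose.absContVec_rowSum fun j i => hB i j

lemma absContMat_rowScale_self (p : Fin m → ℝ) (A : Matrix (Fin m) (Fin n) ℝ) :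
    AbsContMat (rowScale p A) A :=
  fun _ _ h => mul_eq_zero_of_right _ h

lemma absContMat_colScale_self (q : Fin n → ℝ) (A : Matrix (Fin m) (Fin n) ℝ) :
    AbsContMat (colScale q A) A :=
  (absContMat_rowScale_self q Aᵀ).transpose

lemma AbsContMat.rowScale_right (hP : ∀ i j, 0 ≤ P i j) (hA : ∀ i j, 0 ≤ A i j) (h : AbsContMat P A)
    (hp : AbsContVec (rowSum P) p) : AbsContMat P (rowScale p A) := by
  intro i j hij
  obtain hpA | hAij := mul_eq_zero.1 hij
  · have hPi : rowSum P i = 0 := (div_eq_zero_iff.1 hpA).elim (hp i) (h.absContVec_rowSum hA i)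
    exact eq_zero_of_rowSum_eq_zero hP hPi j
  · exact h i j hAij

lemma AbsContMat.colScale_right (hP : ∀ i j, 0 ≤ P i j) (hA : ∀ i j, 0 ≤ A i j) (h : AbsContMat P A)
    (hq : AbsContVec (colSum P) q) : AbsContMat P (colScale q A) :=
  (h.transpose.rowScale_right (fun j i => hP i j) (fun j i => hA i j) hq).transpose

lemma rowScale_nonneg (hp : ∀ i, 0 ≤ p i) (hA : ∀ i j, 0 ≤ A i j) (i : Fin m) (j : Fin n) :
    0 ≤ rowScale p A i j :=
  mul_nonneg (div_nonneg (hp i) (rowSum_nonneg hA i)) (hA i j)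

lemma colScale_nonneg (hq : ∀ j, 0 ≤ q j) (hA : ∀ i j, 0 ≤ A i j) (i : Fin m) (j : Fin n) :
    0 ≤ colScale q A i j :=
  rowScale_nonneg hq (fun j i => hA i j) j i

lemma rowSum_rowScale (h : AbsContVec p (rowSum A)) : rowSum (rowScale p A) = p := by
  funext i
  calc rowSum (rowScale p A) i = p i / rowSum A i * rowSum A i := (mul_sum ..).symm
    _ = p i := div_mul_cancel_of_imp (h i)

lemma colSum_colScale (h : AbsContVec q (colSum A)) : colSum (colScale q A) = q :=
  rowSum_rowScale (A := Aᵀ) h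

lemma rowScale_rowSum_self (hA : ∀ i j, 0 ≤ A i j) : rowScale (rowSum A) A = A := by
  ext i j
  rw [rowScale, div_mul_eq_mul_div]
  exact mul_div_cancel_left_of_imp fun hi => eq_zero_of_rowSum_eq_zero hA hi j

lemma rowScale_rowScale (hp : AbsContVec p (rowSum A)) (hp' : AbsContVec p' p) :
    rowScale p' (rowScale p A) = rowScale p' A := by
  ext i j
  rw [rowScale, rowSum_rowScale hp, rowScale, rowScale, ← mul_assoc, ← mul_div_assoc,
    div_mul_cancel_of_imp (hp' i)]

/-! ### Kullback–Leibler divergence -/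

lemma mul_log_div_sub_add_nonneg {x y : ℝ} (hx : 0 ≤ x) (hy : 0 ≤ y) (h : y = 0 → x = 0) :
    0 ≤ x * Real.log (x / y) - x + y := by
  obtain rfl | hy0 := eq_or_ne y 0
  · simp [h rfl]
  · have hkl : x * Real.log (x / y) - x + y = y * InformationTheory.klFun (x / y) := by
      rw [InformationTheory.klFun]
      field_simp
      ring
    rw [hkl]
    exact mul_nonneg hy (InformationTheory.klFun_nonneg (div_nonneg hx hy))

lemma KLvec_nonneg {a b : Fin k → ℝ} (ha : ∀ i, 0 ≤ a i) (hb : ∀ i, 0 ≤ b i)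
    (h : AbsContVec a b) : 0 ≤ KLvec a b :=
  sum_nonneg fun i _ => mul_log_div_sub_add_nonneg (ha i) (hb i) (h i)

lemma KLmat_nonneg (hA : ∀ i j, 0 ≤ A i j) (hB : ∀ i j, 0 ≤ B i j) (h : AbsContMat A B) :
    0 ≤ KLmat A B :=
  sum_nonneg fun i _ => KLvec_nonneg (hA i) (hB i) (h i)

lemma KLmat_self (A : Matrix (Fin m) (Fin n) ℝ) : KLmat A A = 0 := by
  refine sum_eq_zero fun i _ => sum_eq_zero fun j _ => ?_
  obtain h | h := eq_or_ne (A i j) 0 <;> simp [h]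

lemma KLmat_transpose (A B : Matrix (Fin m) (Fin n) ℝ) : KLmat Aᵀ Bᵀ = KLmat A B :=
  sum_comm

lemma mul_log_div_eq_mul_log_div_rowScale_add (hP : ∀ i j, 0 ≤ P i j) (hA : ∀ i j, 0 ≤ A i j)
    (h : AbsContMat P A) (i : Fin m) (j : Fin n) :
    P i j * Real.log (P i j / A i j) =
      P i j * Real.log (P i j / rowScale (rowSum P) A i j) +
        P i j * Real.log (rowSum P i / rowSum A i) := by
  obtain hPij | hPij := eq_or_ne (P i j) 0
  · simp [hPij]
  · have hAij : A i j ≠ 0 := mt (h i j) hPij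
    have hPi : rowSum P i ≠ 0 := fun hi => hPij (eq_zero_of_rowSum_eq_zero hP hi j)
    have hAi : rowSum A i ≠ 0 := mt (h.absContVec_rowSum hA i) hPi
    rw [rowScale, ← mul_add, ← Real.log_mul (by positivity) (by positivity)]
    congr 2
    field_simp

theorem KLmat_eq_KLmat_rowScale_add_KLvec (hP : ∀ i j, 0 ≤ P i j) (hA : ∀ i j, 0 ≤ A i j)
    (h : AbsContMat P A) :
    KLmat P A = KLmat P (rowScale (rowSum P) A) + KLvec (rowSum P) (rowSum A) := by
  simp only [KLmat, KLvec, ← sum_add_distrib]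
  refine sum_congr rfl fun i _ => ?_
  have hmass : ∑ j, rowScale (rowSum P) A i j = rowSum P i :=
    congrFun (rowSum_rowScale (h.absContVec_rowSum hA)) i
  simp only [mul_log_div_eq_mul_log_div_rowScale_add hP hA h i, sum_add_distrib, sum_sub_distrib,
    ← sum_mul, hmass]
  simp only [rowSum]
  ring

lemma KLmat_eq_KLmat_colScale_add_KLvec (hP : ∀ i j, 0 ≤ P i j) (hA : ∀ i j, 0 ≤ A i j)
    (h : AbsContMat P A) :
    KLmat P A = KLmat P (colScale (colSum P) A) + KLvec (colSum P) (colSum A) := by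
  rw [← KLmat_transpose, ← KLmat_transpose P (colScale _ A)]
  exact KLmat_eq_KLmat_rowScale_add_KLvec (fun j i => hP i j) (fun j i => hA i j) h.transpose

theorem KLvec_rowSum_le_KLmat (hA : ∀ i j, 0 ≤ A i j) (hB : ∀ i j, 0 ≤ B i j)
    (h : AbsContMat A B) : KLvec (rowSum A) (rowSum B) ≤ KLmat A B := by
  rw [KLmat_eq_KLmat_rowScale_add_KLvec hA hB h]
  exact le_add_of_nonneg_left <| KLmat_nonneg hA (rowScale_nonneg (rowSum_nonneg hA) hB)
    (h.rowScale_right hA hB fun _ => id)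

theorem KLvec_colSum_le_KLmat (hA : ∀ i j, 0 ≤ A i j) (hB : ∀ i j, 0 ≤ B i j)
    (h : AbsContMat A B) : KLvec (colSum A) (colSum B) ≤ KLmat A B := by
  rw [← KLmat_transpose]
  exact KLvec_rowSum_le_KLmat (fun j i => hA i j) (fun j i => hB i j) h.transpose

lemma KLmat_rowScale_left (hp : ∀ i, 0 ≤ p i) (hA : ∀ i j, 0 ≤ A i j)
    (h : AbsContVec p (rowSum A)) : KLmat (rowScale p A) A = KLvec p (rowSum A) := by
  rw [KLmat_eq_KLmat_rowScale_add_KLvec (rowScale_nonneg hp hA) hA (absContMat_rowScale_self p A),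
    rowSum_rowScale h, KLmat_self, zero_add]

lemma KLmat_colScale_left (hq : ∀ j, 0 ≤ q j) (hA : ∀ i j, 0 ≤ A i j)
    (h : AbsContVec q (colSum A)) : KLmat (colScale q A) A = KLvec q (colSum A) := by
  rw [← KLmat_transpose]
  exact KLmat_rowScale_left hq (fun j i => hA i j) h

lemma KLmat_rowScale_right (hp : ∀ i, 0 ≤ p i) (hA : ∀ i j, 0 ≤ A i j)
    (h : AbsContVec p (rowSum A)) (h' : AbsContVec (rowSum A) p) :
    KLmat A (rowScale p A) = KLvec (rowSum A) p := by
  have hA' : AbsContMat A (rowScale p A) := AbsContMat.rowScale_right hA hA (fun _ _ => id) h'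
  rw [KLmat_eq_KLmat_rowScale_add_KLvec hA (rowScale_nonneg hp hA) hA', rowScale_rowScale h h',
    rowScale_rowSum_self hA, KLmat_self, zero_add, rowSum_rowScale h]

/-! ### Sinkhorn iterations -/

lemma nonneg_left_of_mem_Gamma (hP : P ∈ Gamma p q) (i : Fin m) : 0 ≤ p i := by
  rw [← hP.2.1]
  exact rowSum_nonneg hP.1 i

lemma nonneg_right_of_mem_Gamma (hP : P ∈ Gamma p q) (j : Fin n) : 0 ≤ q j := by
  rw [← hP.2.2]
  exact rowSum_nonneg (A := Pᵀ) (fun j i => hP.1 i j) j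

lemma simplexPos_subset_simplexNN (k : ℕ) : simplexPos k ⊆ simplexNN k :=
  fun _ hr => ⟨fun i => (hr.1 i).le, hr.2⟩

lemma vecMulVec_mem_Gamma (hp : p ∈ simplexNN m) (hq : q ∈ simplexNN n) :
    Matrix.vecMulVec p q ∈ Gamma p q := by
  refine ⟨fun i j => mul_nonneg (hp.1 i) (hq.1 j), funext fun i => ?_, funext fun j => ?_⟩
  · simp [rowSum, Matrix.vecMulVec_apply, ← mul_sum, hq.2]
  · simp [colSum, Matrix.vecMulVec_apply, ← sum_mul, hp.2]

lemma sinkhornStep_nonneg (hp : ∀ i, 0 ≤ p i) (hq : ∀ j, 0 ≤ q j) (hA : ∀ i j, 0 ≤ A i j)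
    (i : Fin m) (j : Fin n) : 0 ≤ sinkhornStep p q A i j :=
  colScale_nonneg hq (rowScale_nonneg hp hA) i j

lemma AbsContMat.sinkhornStep_right (hP : P ∈ Gamma p q) (hA : ∀ i j, 0 ≤ A i j)
    (h : AbsContMat P A) : AbsContMat P (sinkhornStep p q A) := by
  obtain ⟨hP0, rfl, rfl⟩ := hP
  exact (h.rowScale_right hP0 hA fun _ => id).colScale_right hP0
    (rowScale_nonneg (rowSum_nonneg hP0) hA) fun _ => id

lemma absContVec_rowSum_sinkhornStep (p : Fin m → ℝ) (q : Fin n → ℝ)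
    (A : Matrix (Fin m) (Fin n) ℝ) : AbsContVec (rowSum (sinkhornStep p q A)) p := by
  refine fun i hi => sum_eq_zero fun j _ => absContMat_colScale_self q (rowScale p A) i j ?_
  simp [rowScale, hi]

lemma absContVec_colSum_rowScale (hP : P ∈ Gamma p q) (hA : ∀ i j, 0 ≤ A i j)
    (h : AbsContMat P A) : AbsContVec q (colSum (rowScale p A)) := by
  obtain ⟨hP0, rfl, rfl⟩ := hP
  exact (h.rowScale_right hP0 hA fun _ => id).absContVec_colSum
    (rowScale_nonneg (rowSum_nonneg hP0) hA)

lemma colSum_sinkhornStep (hP : P ∈ Gamma p q) (hA : ∀ i j, 0 ≤ A i j) (h : AbsContMat P A) :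
    colSum (sinkhornStep p q A) = q :=
  colSum_colScale (absContVec_colSum_rowScale hP hA h)

lemma KLvec_rowSum_sinkhornStep_le (hP : P ∈ Gamma p q) (hA : ∀ i j, 0 ≤ A i j)
    (h : AbsContMat P A) :
    KLvec (rowSum (sinkhornStep p q A)) p ≤ KLvec q (colSum (rowScale p A)) := by
  have hp := nonneg_left_of_mem_Gamma hP
  have hq := nonneg_right_of_mem_Gamma hP
  have hpA : AbsContVec p (rowSum A) := hP.2.1 ▸ h.absContVec_rowSum hA
  have hB := rowScale_nonneg hp hA
  calc KLvec (rowSum (sinkhornStep p q A)) p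
      = KLvec (rowSum (sinkhornStep p q A)) (rowSum (rowScale p A)) := by rw [rowSum_rowScale hpA]
    _ ≤ KLmat (sinkhornStep p q A) (rowScale p A) :=
        KLvec_rowSum_le_KLmat (sinkhornStep_nonneg hp hq hA) hB (absContMat_colScale_self q _)
    _ = KLvec q (colSum (rowScale p A)) :=
        KLmat_colScale_left hq hB (absContVec_colSum_rowScale hP hA h)

theorem KLvec_rowSum_sinkhornStep_add_KLmat_le (hP : P ∈ Gamma p q) (hA : ∀ i j, 0 ≤ A i j)
    (h : AbsContMat P A) :
    KLvec (rowSum (sinkhornStep p q A)) p + KLmat P (sinkhornStep p q A) ≤ KLmat P A := by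
  have herr := KLvec_rowSum_sinkhornStep_le hP hA h
  obtain ⟨hP0, rfl, rfl⟩ := hP
  have hB := rowScale_nonneg (rowSum_nonneg hP0) hA
  have hPB : AbsContMat P (rowScale (rowSum P) A) := h.rowScale_right hP0 hA fun _ => id
  have hrow := KLmat_eq_KLmat_rowScale_add_KLvec hP0 hA h
  have hcol := KLmat_eq_KLmat_colScale_add_KLvec hP0 hB hPB
  have hnonneg : 0 ≤ KLvec (rowSum P) (rowSum A) :=
    KLvec_nonneg (rowSum_nonneg hP0) (rowSum_nonneg hA) (h.absContVec_rowSum hA)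
  rw [sinkhornStep] at herr ⊢
  linarith

theorem KLvec_rowSum_sinkhornStep_le_of_colSum_eq (hP : P ∈ Gamma p q) (hA : ∀ i j, 0 ≤ A i j)
    (h : AbsContMat P A) (hcol : colSum A = q) (hrow : AbsContVec (rowSum A) p) :
    KLvec (rowSum (sinkhornStep p q A)) p ≤ KLvec (rowSum A) p := by
  have hp := nonneg_left_of_mem_Gamma hP
  have hpA : AbsContVec p (rowSum A) := hP.2.1 ▸ h.absContVec_rowSum hA
  have hAB : AbsContMat A (rowScale p A) := AbsContMat.rowScale_right hA hA (fun _ _ => id) hrow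
  calc KLvec (rowSum (sinkhornStep p q A)) p
      ≤ KLvec q (colSum (rowScale p A)) := KLvec_rowSum_sinkhornStep_le hP hA h
    _ = KLvec (colSum A) (colSum (rowScale p A)) := by rw [hcol]
    _ ≤ KLmat A (rowScale p A) := KLvec_colSum_le_KLmat hA (rowScale_nonneg hp hA) hAB
    _ = KLvec (rowSum A) p := KLmat_rowScale_right hp hA hpA hrow

lemma iterate_sinkhornStep_nonneg (hP : P ∈ Gamma p q) (hA : ∀ i j, 0 ≤ A i j) (t : ℕ) :
    ∀ i j, 0 ≤ (sinkhornStep p q)^[t] A i j := by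
  induction t with
  | zero => exact hA
  | succ t ih =>
    rw [Function.iterate_succ_apply']
    exact sinkhornStep_nonneg (nonneg_left_of_mem_Gamma hP) (nonneg_right_of_mem_Gamma hP) ih

lemma AbsContMat.iterate_sinkhornStep_right (hP : P ∈ Gamma p q) (hA : ∀ i j, 0 ≤ A i j)
    (h : AbsContMat P A) (t : ℕ) : AbsContMat P ((sinkhornStep p q)^[t] A) := by
  induction t with
  | zero => exact h
  | succ t ih =>
    rw [Function.iterate_succ_apply']
    exact ih.sinkhornStep_right hP (iterate_sinkhornStep_nonneg hP hA t)

lemma sum_KLvec_rowSum_iterate_add_KLmat_le (hP : P ∈ Gamma p q) (hA : ∀ i j, 0 ≤ A i j)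
    (h : AbsContMat P A) (t : ℕ) :
    ∑ s ∈ range t, KLvec (rowSum ((sinkhornStep p q)^[s + 1] A)) p +
      KLmat P ((sinkhornStep p q)^[t] A) ≤ KLmat P A := by
  induction t with
  | zero => simp
  | succ t ih =>
    have hstep := KLvec_rowSum_sinkhornStep_add_KLmat_le hP (iterate_sinkhornStep_nonneg hP hA t)
      (h.iterate_sinkhornStep_right hP hA t)
    rw [sum_range_succ, Function.iterate_succ_apply']
    linarith

lemma antitone_KLvec_rowSum_iterate_succ (hP : P ∈ Gamma p q) (hA : ∀ i j, 0 ≤ A i j)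
    (h : AbsContMat P A) :
    Antitone fun s => KLvec (rowSum ((sinkhornStep p q)^[s + 1] A)) p := by
  refine antitone_nat_of_succ_le fun s => ?_
  have hnonneg := iterate_sinkhornStep_nonneg hP hA
  have habs := h.iterate_sinkhornStep_right hP hA
  have hcol : colSum ((sinkhornStep p q)^[s + 1] A) = q := by
    rw [Function.iterate_succ_apply']
    exact colSum_sinkhornStep hP (hnonneg s) (habs s)
  have hrow : AbsContVec (rowSum ((sinkhornStep p q)^[s + 1] A)) p := by
    rw [Function.iterate_succ_apply']
    exact absContVec_rowSum_sinkhornStep p q _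
  rw [Function.iterate_succ_apply' _ (s + 1)]
  exact KLvec_rowSum_sinkhornStep_le_of_colSum_eq hP (hnonneg (s + 1)) (habs (s + 1)) hcol hrow

theorem mul_KLvec_rowSum_iterate_le (hP : P ∈ Gamma p q) (hA : ∀ i j, 0 ≤ A i j)
    (h : AbsContMat P A) (t : ℕ) :
    t * KLvec (rowSum ((sinkhornStep p q)^[t] A)) p ≤ KLmat P A := by
  have hlast : ∀ s ∈ range t, KLvec (rowSum ((sinkhornStep p q)^[t] A)) p ≤
      KLvec (rowSum ((sinkhornStep p q)^[s + 1] A)) p := by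
    intro s hs
    obtain ⟨r, rfl⟩ := Nat.exists_eq_succ_of_ne_zero (Nat.ne_zero_of_lt (mem_range.1 hs))
    exact antitone_KLvec_rowSum_iterate_succ hP hA h (Nat.lt_succ_iff.1 (mem_range.1 hs))
  have hcard := card_nsmul_le_sum _ _ _ hlast
  rw [card_range, nsmul_eq_mul] at hcard
  have hsum := sum_KLvec_rowSum_iterate_add_KLmat_le hP hA h t
  have hnonneg := KLmat_nonneg hP.1 (iterate_sinkhornStep_nonneg hP hA t)
    (h.iterate_sinkhornStep_right hP hA t)
  linarith

/-! ### Scaling form of the iterates -/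

lemma transpose_scaling (K : Matrix (Fin m) (Fin n) ℝ) (a : Fin m → ℝ) (b : Fin n → ℝ) :
    (scaling K a b)ᵀ = scaling Kᵀ b a := by
  ext j i
  rw [Matrix.transpose_apply, scaling, scaling, Matrix.transpose_apply]
  ring

lemma rowScale_scaling (K : Matrix (Fin m) (Fin n) ℝ) (b : Fin n → ℝ) {a : Fin m → ℝ}
    (h : AbsContVec p a) :
    rowScale p (scaling K a b) = scaling K (fun i => p i / ∑ j, K i j * b j) b := by
  ext i j
  have hsum : rowSum (scaling K a b) i = a i * ∑ j, K i j * b j := by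
    simp only [rowSum, scaling, mul_sum, mul_assoc]
  have hp : p i * a i / a i = p i := mul_div_cancel_of_imp (h i)
  rw [rowScale, hsum]
  calc p i / (a i * ∑ j, K i j * b j) * (a i * K i j * b j)
      = p i * a i / a i / (∑ j, K i j * b j) * K i j * b j := by
        generalize ∑ j, K i j * b j = S
        ring
    _ = p i / (∑ j, K i j * b j) * K i j * b j := by rw [hp]

lemma colScale_scaling (K : Matrix (Fin m) (Fin n) ℝ) (a : Fin m → ℝ) {b : Fin n → ℝ}
    (h : AbsContVec q b) :
    colScale q (scaling K a b) = scaling K a fun j => q j / ∑ i, K i j * a i := by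
  rw [colScale, transpose_scaling, rowScale_scaling Kᵀ a h, transpose_scaling]
  rfl

lemma absContVec_of_absContMat_scaling {K : Matrix (Fin m) (Fin n) ℝ} {a : Fin m → ℝ}
    {b : Fin n → ℝ} (h : AbsContMat P (scaling K a b)) :
    AbsContVec (rowSum P) a ∧ AbsContVec (colSum P) b :=
  ⟨fun i hi => sum_eq_zero fun j _ => h i j (by simp [scaling, hi]),
    fun j hj => sum_eq_zero fun i _ => h i j (by simp [scaling, hj])⟩

lemma sinkPlan_eq_scaling (p : Fin m → ℝ) (q : Fin n → ℝ) (c : Matrix (Fin m) (Fin n) ℝ)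
    (β : ℕ → ℝ) (t : ℕ) :
    sinkPlan p q c β t = scaling (gibbs c (β t)) (sinkAB p q c β t).1 (sinkAB p q c β t).2 :=
  rfl

lemma sinkPlan_succ (hP : P ∈ Gamma p q) (c : Matrix (Fin m) (Fin n) ℝ) (β : ℝ) (t : ℕ)
    (h : AbsContMat P (sinkPlan p q c (fun _ => β) t)) :
    sinkPlan p q c (fun _ => β) (t + 1) = sinkhornStep p q (sinkPlan p q c (fun _ => β) t) := by
  obtain ⟨-, rfl, rfl⟩ := hP
  rw [sinkPlan_eq_scaling] at h
  obtain ⟨ha, hb⟩ := absContVec_of_absContMat_scaling h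
  rw [sinkhornStep, sinkPlan_eq_scaling _ _ _ _ t, rowScale_scaling _ _ ha, colScale_scaling _ _ hb]
  rfl

lemma sinkPlan_zero_pos (p : Fin m → ℝ) (q : Fin n → ℝ) (c : Matrix (Fin m) (Fin n) ℝ)
    (β : ℕ → ℝ) (i : Fin m) (j : Fin n) : 0 < sinkPlan p q c β 0 i j := by
  simp [sinkPlan, sinkAB, gibbs, Real.exp_pos]

lemma sinkPlan_eq_iterate (hP : P ∈ Gamma p q) (c : Matrix (Fin m) (Fin n) ℝ) (β : ℝ) (t : ℕ) :
    sinkPlan p q c (fun _ => β) t = (sinkhornStep p q)^[t] (sinkPlan p q c (fun _ => β) 0) := by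
  have hpos := sinkPlan_zero_pos p q c fun _ => β
  induction t with
  | zero => rfl
  | succ t ih =>
    have habs : AbsContMat P (sinkPlan p q c (fun _ => β) t) := ih ▸
      AbsContMat.iterate_sinkhornStep_right hP (fun i j => (hpos i j).le)
        (fun i j hij => absurd hij (hpos i j).ne') t
    rw [sinkPlan_succ hP c β t habs, ih, Function.iterate_succ_apply']

theorem mul_KLvec_rowSum_sinkPlan_le (hP : P ∈ Gamma p q) (c : Matrix (Fin m) (Fin n) ℝ) (β : ℝ)
    (t : ℕ) :
    t * KLvec (rowSum (sinkPlan p q c (fun _ => β) t)) p ≤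
      KLmat P (sinkPlan p q c (fun _ => β) 0) := by
  have hpos := sinkPlan_zero_pos p q c fun _ => β
  rw [sinkPlan_eq_iterate hP c β t]
  exact mul_KLvec_rowSum_iterate_le hP (fun i j => (hpos i j).le)
    (fun i j hij => absurd hij (hpos i j).ne') t

theorem sinkhorn_marginal_rate_general (hΓ : (Gamma p q).Nonempty)
    (c : Matrix (Fin m) (Fin n) ℝ) (β : ℝ) :
    ∀ t : ℕ, 1 ≤ t →
      KLvec (rowSum (sinkPlan p q c (fun _ => β) t)) p ≤
        (⨅ π : Gamma p q, KLmat π.1 (sinkPlan p q c (fun _ => β) 0)) / (t : ℝ) := by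
  intro t ht
  have : Nonempty (Gamma p q) := hΓ.to_subtype
  rw [le_div_iff₀' (by positivity)]
  exact le_ciInf fun π => mul_KLvec_rowSum_sinkPlan_le π.2 c β t

end Sinkhorn

/-- mirror-descent rate for standard Sinkhorn, Eq. (9).
For the standard Sinkhorn iterates at fixed inverse temperature `β`,
`KL(π_t𝟙|p) ≤ (inf_{π ∈ Γ(p,q)} KL(π|π_0)) / t` for all `t ≥ 1`. -/
theorem sinkhorn_marginal_rate
    {m n : ℕ} (p : Fin m → ℝ) (q : Fin n → ℝ) (c : Matrix (Fin m) (Fin n) ℝ)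
    (hp : p ∈ simplexPos m) (hq : q ∈ simplexPos n)
    (β : ℝ) (hβ : 0 < β) :
    ∀ t : ℕ, 1 ≤ t →
      KLvec (rowSum (sinkPlan p q c (fun _ => β) t)) p ≤
        (⨅ π : Gamma p q, KLmat π.1 (sinkPlan p q c (fun _ => β) 0)) / (t : ℝ) := by
  exact sinkhorn_marginal_rate_general ⟨_, vecMulVec_mem_Gamma
    (simplexPos_subset_simplexNN m hp) (simplexPos_subset_simplexNN n hq)⟩ c β

end
end
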